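/- Let δ(A) = α·|A| − |E(A)| with α > 0, and for A ⊆ B define A ≤ B (d-closedness) to mean δ(A) < δ(B') whenever A ⊊ B' ⊆ B. If A ≤ C and B ≤ C (both finite subgraphs of C), then A ∩ B ≤ C. -/

import Mathlib

def edgeCount {V : Type*} [Fintype V] [DecidableEq V] (G : SimpleGraph V)
    [DecidableRel G.Adj] (s : Finset V) : ℕ :=
  (G.edgeFinset ∩ s.sym2).card

noncomputable def pdim {V : Type*} [Fintype V] [DecidableEq V] (α : ℝ) (G : SimpleGraph V)
    [DecidableRel G.Adj] (s : Finset V) : ℝ :=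
  α * s.card - edgeCount G s

/-- `A ≤ B` : `A` is d-closed in `B`. -/
def dClosedIn {V : Type*} [Fintype V] [DecidableEq V] (α : ℝ) (G : SimpleGraph V)
    [DecidableRel G.Adj] (A B : Finset V) : Prop :=
  A ⊆ B ∧ ∀ B' : Finset V, A ⊂ B' → B' ⊆ B → pdim α G A < pdim α G B'

theorem pdim_submod {V : Type*} [Fintype V] [DecidableEq V] (α : ℝ) (G : SimpleGraph V)
    [DecidableRel G.Adj] (X A : Finset V) :
    pdim α G (X ∪ A) + pdim α G (X ∩ A) ≤ pdim α G X + pdim α G A := by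
  have hc : ((X ∪ A).card : ℝ) + (X ∩ A).card = X.card + A.card := by
    exact_mod_cast Finset.card_union_add_card_inter X A
  have he : edgeCount G X + edgeCount G A ≤ edgeCount G (X ∪ A) + edgeCount G (X ∩ A) := by
    unfold edgeCount
    rw [← Finset.card_union_add_card_inter]
    apply Nat.add_le_add
    · apply Finset.card_le_card
      intro e he
      simp only [Finset.mem_union, Finset.mem_inter, Finset.mem_sym2_iff] at he ⊢
      grind
    · apply Finset.card_le_card
      intro e he
      simp only [Finset.mem_inter, Finset.mem_sym2_iff] at he ⊢
      grind
  have he' : (edgeCount G X : ℝ) + edgeCount G A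
      ≤ edgeCount G (X ∪ A) + edgeCount G (X ∩ A) := by exact_mod_cast he
  unfold pdim
  have : α * (X ∪ A).card + α * (X ∩ A).card = α * X.card + α * A.card := by
    rw [← mul_add, hc, mul_add]
  linarith

theorem dClosedIn_step {V : Type*} [Fintype V] [DecidableEq V] (α : ℝ) (G : SimpleGraph V)
    [DecidableRel G.Adj] (X A C : Finset V) (h : dClosedIn α G A C) (hX : X ⊆ C)
    (hXA : ¬ X ⊆ A) : pdim α G (X ∩ A) < pdim α G X := by
  have h1 := h.2 (X ∪ A)
    ⟨Finset.subset_union_right, fun h' => hXA (Finset.subset_union_left.trans h')⟩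
    (Finset.union_subset hX h.1)
  have h2 := pdim_submod α G X A
  linarith

/-- If `A ≤ C` and `B ≤ C` then `A ∩ B ≤ C`. -/
theorem dClosedIn_inter {V : Type*} [Fintype V] [DecidableEq V] (G : SimpleGraph V)
    [DecidableRel G.Adj] (α : ℝ) (hα : 0 < α) (A B C : Finset V)
    (hAC : dClosedIn α G A C) (hBC : dClosedIn α G B C) : dClosedIn α G (A ∩ B) C := by
  refine ⟨Finset.inter_subset_left.trans hAC.1, fun X hX hXC => ?_⟩
  have e : (X ∩ A) ∩ B = A ∩ B := by
    rw [Finset.inter_assoc]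
    exact Finset.inter_eq_right.2 hX.1
  rw [← e]
  by_cases h1 : X ⊆ A
  · rw [Finset.inter_eq_left.2 h1]
    exact dClosedIn_step α G X B C hBC hXC fun h2 => hX.2 (Finset.subset_inter h1 h2)
  · have s1 := dClosedIn_step α G X A C hAC hXC h1
    by_cases h2 : X ∩ A ⊆ B
    · rwa [Finset.inter_eq_left.2 h2]
    · exact (dClosedIn_step α G (X ∩ A) B C hBC (Finset.inter_subset_left.trans hXC) h2).trans s1
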